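/- Let A > 13 and δ > 0 be fixed and let h ∈ 𝓗(A,δ). Then there exists a constant C = C(A,h) such that |H⁺(x)| ≤ C·x for all x ∈ (0,4π); in particular, H⁺(x) → 0 as x → 0⁺. -/

import Mathlib

open MeasureTheory Real Complex

/-- The Bessel function of the first kind `J_ν(x)`, for `x > 0`, defined via its power series,
where `(x/2)^w := exp (w * log (x/2))` with the real logarithm. -/
noncomputable def besselJ (ν : ℂ) (x : ℝ) : ℂ :=
  ∑' m : ℕ, ((-1) ^ m / ((Nat.factorial m : ℂ) * Complex.Gamma (m + ν + 1))) *
    Complex.exp ((2 * m + ν) * Real.log (x / 2))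

/-- The integral transform `H⁺(x) = (2i/π) ∫_ℝ h(t) J_{2it}(x) t / cosh(πt) dt`. -/
noncomputable def Hplus (h : ℝ → ℝ) (x : ℝ) : ℂ :=
  (2 * Complex.I / (π : ℂ)) *
    ∫ t : ℝ, (h t : ℂ) * besselJ (2 * Complex.I * t) x * ((t : ℂ) / (Real.cosh (π * t) : ℂ))

/-- `h : ℝ → ℝ` belongs to the class `𝓗(A, δ)`, witnessed by the holomorphic extension
`H : ℂ → ℂ` to the strip `{s : |Im s| ≤ A}`. -/
structure IsInHClass (A δ : ℝ) (h : ℝ → ℝ) (H : ℂ → ℂ) : Prop where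
  nonneg : ∀ t : ℝ, 0 ≤ h t
  even : ∀ t : ℝ, h (-t) = h t
  not_zero : ∃ t : ℝ, h t ≠ 0
  extends_h : ∀ t : ℝ, H (t : ℂ) = (h t : ℂ)
  even_ext : ∀ s : ℂ, H (-s) = H s
  holo : DifferentiableOn ℂ H {s : ℂ | |s.im| ≤ A}
  bound : ∃ C : ℝ, ∀ s : ℂ, |s.im| ≤ A → ‖H s‖ ≤ C * (1 + ‖s‖) ^ (-(2 + δ))

/-!
Shift the contour in `Hplus` from `Im t = 0` to `Im t = -1`. The only pole of `1 / cosh (π t)` that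
is crossed is `t = -i / 2`, where the Bessel function has order `2it = 1` and so contributes `O(x)`;
on `Im t = -1` its order is `2 + 2iu`, which contributes `O(x ^ 2)`. The residue is taken out by
subtracting from the numerator its value at the pole: since `cosh (π (t - i)) = -cosh (π t)`, the
remaining integral of `1 / cosh` is the same on both lines up to sign.

The integrals converge because the growth `exp (π |Im ν| / 2)` of `1 / Γ` inside `J_ν` is cancelled
by `cosh (π t)`. This growth is read off the reflection formula on the line `Re s = 1`, and carried
to `Re s ≥ 1` by Gauss's product, which exhibits `‖Γ (x + i y)‖ / Γ x` as the limit of products of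
factors `(x + j) / ‖x + j + i y‖` that increase with `x`.
-/

section

open Set Filter Topology

section Hyperbolic

lemma norm_cosh_sq (z : ℂ) :
    ‖Complex.cosh z‖ ^ 2 = Real.cos z.im ^ 2 + Real.sinh z.re ^ 2 := by
  have hz : Complex.cosh z = (Real.cosh z.re * Real.cos z.im : ℝ)
      + (Real.sinh z.re * Real.sin z.im : ℝ) * I := by
    conv_lhs => rw [← Complex.re_add_im z, Complex.cosh_add, Complex.cosh_mul_I, Complex.sinh_mul_I]
    push_cast
    ring
  rw [hz, ← Complex.normSq_eq_norm_sq, Complex.normSq_add_mul_I]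
  linear_combination Real.cos z.im ^ 2 * Real.cosh_sq z.re
    + Real.sinh z.re ^ 2 * Real.sin_sq_add_cos_sq z.im

lemma abs_sinh_re_le_norm_cosh (z : ℂ) : |Real.sinh z.re| ≤ ‖Complex.cosh z‖ :=
  abs_le_of_sq_le_sq (by rw [norm_cosh_sq]; linarith [sq_nonneg (Real.cos z.im)])
    (norm_nonneg _)

lemma exp_abs_le_two_mul_cosh (y : ℝ) : Real.exp |y| ≤ 2 * Real.cosh y := by
  linarith [Real.exp_abs_le y, Real.cosh_eq y]

lemma exp_abs_div_four_le_abs_sinh {y : ℝ} (hy : 1 ≤ |y|) :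
    Real.exp |y| / 4 ≤ |Real.sinh y| := by
  rw [Real.abs_sinh, Real.sinh_eq]
  have : Real.exp (-|y|) ≤ 1 := Real.exp_le_one_iff.2 (by linarith)
  linarith [Real.add_one_le_exp |y|]

lemma exp_abs_div_four_le_norm_cosh {z : ℂ} (hz : 1 ≤ |z.re|) :
    Real.exp |z.re| / 4 ≤ ‖Complex.cosh z‖ :=
  (exp_abs_div_four_le_abs_sinh hz).trans (abs_sinh_re_le_norm_cosh z)

lemma sinh_le_self_mul_exp (y : ℝ) : Real.sinh y ≤ y * Real.exp y := by
  have hinv : Real.exp (-y) = Real.exp y * Real.exp (-(2 * y)) := by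
    rw [← Real.exp_add]; ring_nf
  rw [Real.sinh_eq, hinv]
  nlinarith [Real.exp_pos y, Real.add_one_le_exp (-(2 * y))]

lemma one_add_sq_le_cosh_pi_mul (u : ℝ) : 1 + u ^ 2 ≤ Real.cosh (π * u) := by
  have hcosh : Real.cosh (π * u) = 1 + 2 * Real.sinh (π * u / 2) ^ 2 := by
    conv_lhs => rw [← mul_div_cancel₀ (π * u) (two_ne_zero' ℝ), Real.cosh_two_mul, Real.cosh_sq]
    ring
  have hsinh : |π * u / 2| ≤ |Real.sinh (π * u / 2)| := by
    rw [Real.abs_sinh]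
    exact Real.self_le_sinh_iff.2 (abs_nonneg _)
  have hpi : 2 ≤ π ^ 2 := by nlinarith [Real.pi_gt_three]
  nlinarith [sq_le_sq.2 hsinh, sq_nonneg u]

lemma cosh_pi_mul_ofReal_ne_zero (u : ℝ) : Complex.cosh (π * u) ≠ 0 :=
  mod_cast (Real.cosh_pos (π * u)).ne'

lemma cosh_pi_mul_sub_I (z : ℂ) : Complex.cosh (π * (z - I)) = -Complex.cosh (π * z) := by
  rw [mul_sub, Complex.cosh_sub, Complex.cosh_mul_I, Complex.sinh_mul_I, Complex.cos_pi,
    Complex.sin_pi]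
  ring

lemma eq_neg_I_div_two_of_cosh_pi_mul_eq_zero {z : ℂ} (him : z.im ∈ Icc (-1) 0)
    (hz : Complex.cosh (π * z) = 0) : z = -I / 2 := by
  rw [← Complex.cos_mul_I, Complex.cos_eq_zero_iff] at hz
  obtain ⟨k, hk⟩ := hz
  have hzk : z = -((2 * k + 1) / 2 : ℝ) * I := by
    have : (π : ℂ) ≠ 0 := mod_cast Real.pi_ne_zero
    apply mul_left_cancel₀ this
    push_cast
    linear_combination -I * hk + π * z * I_sq
  have hk0 : k = 0 := by
    have : z.im = -((2 * k + 1) / 2) := by simpa using congrArg Complex.im hzk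
    rw [this] at him
    have h1 : (-1 : ℝ) < k := by linarith [him.2]
    have h2 : (k : ℝ) < 1 := by linarith [him.1]
    norm_cast at h1 h2
    lia
  rw [hzk, hk0]
  norm_num
  ring

end Hyperbolic

section Gamma

lemma div_norm_add_mul_I_le {a b : ℝ} (ha : 0 < a) (hab : a ≤ b) (y : ℝ) :
    a / ‖(a + y * I : ℂ)‖ ≤ b / ‖(b + y * I : ℂ)‖ := by
  have hb := ha.trans_le hab
  have hne {c : ℝ} (hc : 0 < c) : 0 < ‖(c + y * I : ℂ)‖ :=
    norm_pos_iff.2 fun h => hc.ne' (by simpa using congrArg Complex.re h)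
  rw [div_le_div_iff₀ (hne ha) (hne hb)]
  refine abs_le_of_sq_le_sq' ?_ (by positivity) |>.2
  have hsq (c : ℝ) : ‖(c + y * I : ℂ)‖ ^ 2 = c ^ 2 + y ^ 2 := by
    rw [Complex.norm_add_mul_I, Real.sq_sqrt (by positivity)]
  rw [mul_pow, mul_pow, hsq, hsq]
  nlinarith [mul_le_mul hab hab ha.le hb.le, sq_nonneg y]

lemma tendsto_prod_div_norm_add_mul_I {x : ℝ} (hx : 0 < x) (y : ℝ) :
    Tendsto (fun n : ℕ => ∏ j ∈ Finset.range (n + 1), (x + j) / ‖((x + j : ℝ) + y * I : ℂ)‖) atTop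
      (𝓝 (‖Complex.Gamma (x + y * I)‖ / Real.Gamma x)) := by
  refine ((Complex.GammaSeq_tendsto_Gamma (x + y * I)).norm.div
    (Real.GammaSeq_tendsto_Gamma x) (Real.Gamma_pos_of_pos hx).ne').congr' ?_
  filter_upwards [eventually_gt_atTop 0] with n hn
  have hpow : ‖(n : ℂ) ^ (x + y * I : ℂ)‖ = (n : ℝ) ^ x := by
    simp [Complex.norm_natCast_cpow_of_pos hn]
  have hprod : ‖∏ j ∈ Finset.range (n + 1), ((x + y * I : ℂ) + j)‖
      = ∏ j ∈ Finset.range (n + 1), ‖((x + j : ℝ) + y * I : ℂ)‖ := by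
    rw [norm_prod]
    push_cast
    simp only [add_right_comm]
  have hpos : (n : ℝ) ^ x * n.factorial ≠ 0 := by positivity
  simp only [Pi.div_apply]
  rw [Complex.GammaSeq, Real.GammaSeq, norm_div, norm_mul, hpow, hprod, Complex.norm_natCast,
    Finset.prod_div_distrib, div_div_div_cancel_left' _ _ hpos]

lemma monotoneOn_norm_Gamma_div_Gamma (y : ℝ) :
    MonotoneOn (fun x : ℝ => ‖Complex.Gamma (x + y * I)‖ / Real.Gamma x) (Ioi 0) := by
  intro a (ha : 0 < a) b _ hab
  refine le_of_tendsto_of_tendsto' (tendsto_prod_div_norm_add_mul_I ha y)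
    (tendsto_prod_div_norm_add_mul_I (ha.trans_le hab) y) fun n => ?_
  refine Finset.prod_le_prod (fun j _ => by positivity) fun j _ => ?_
  exact div_norm_add_mul_I_le (by positivity) (by gcongr) y

lemma norm_Gamma_one_add_mul_I_sq {y : ℝ} (hy : y ≠ 0) :
    ‖Complex.Gamma (1 + y * I)‖ ^ 2 = π * y / Real.sinh (π * y) := by
  have hyI : (y : ℂ) * I ≠ 0 := by simpa using hy
  have hconj : (starRingEnd ℂ) (1 + y * I) = 1 - y * I := by simp [sub_eq_add_neg]
  have hreflection : Complex.Gamma (1 + y * I) * (starRingEnd ℂ) (Complex.Gamma (1 + y * I))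
      = π * y / Complex.sinh (π * y) := by
    rw [← Complex.Gamma_conj, hconj, add_comm (1 : ℂ), Complex.Gamma_add_one _ hyI, mul_assoc,
      Complex.Gamma_mul_Gamma_one_sub, ← mul_assoc (π : ℂ), Complex.sin_mul_I]
    field_simp
  rw [Complex.mul_conj, Complex.normSq_eq_norm_sq] at hreflection
  exact_mod_cast hreflection

lemma exp_neg_le_norm_Gamma_one_add_mul_I (y : ℝ) :
    Real.exp (-(π * |y| / 2)) ≤ ‖Complex.Gamma (1 + y * I)‖ := by
  rcases eq_or_ne y 0 with rfl | hy
  · simp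
  have hpos : 0 < π * |y| := mul_pos Real.pi_pos (abs_pos.2 hy)
  have habs : π * y / Real.sinh (π * y) = π * |y| / Real.sinh (π * |y|) := by
    rcases abs_choice y with h | h <;> rw [h]
    rw [mul_neg, Real.sinh_neg, neg_div_neg_eq]
  refine abs_le_of_sq_le_sq' ?_ (norm_nonneg _) |>.2
  rw [norm_Gamma_one_add_mul_I_sq hy, habs, le_div_iff₀ (Real.sinh_pos_iff.2 hpos),
    ← Real.exp_nat_mul]
  calc Real.exp ((2 : ℕ) * -(π * |y| / 2)) * Real.sinh (π * |y|)
      ≤ Real.exp ((2 : ℕ) * -(π * |y| / 2)) * (π * |y| * Real.exp (π * |y|)) := by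
        gcongr; exact sinh_le_self_mul_exp _
    _ = π * |y| * Real.exp ((2 : ℕ) * -(π * |y| / 2) + π * |y|) := by rw [Real.exp_add]; ring
    _ = π * |y| := by simp [mul_div_cancel₀]

lemma half_lt_Gamma {x : ℝ} (hx : 0 < x) : 1 / 2 < Real.Gamma x := by
  obtain ⟨x₀, hx₀, hmin⟩ := Real.exists_isMinOn_Gamma_Ioi
  have hpos : 0 < x₀ := one_pos.trans hx₀.1
  have hstep : 1 ≤ x₀ * Real.Gamma x₀ := by
    have h2 : 2 ≤ x₀ + 1 := by linarith [hx₀.1]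
    rw [← Real.Gamma_add_one hpos.ne']
    exact Real.Gamma_two.ge.trans
      (Real.Gamma_strictMonoOn_Ici.monotoneOn self_mem_Ici h2 h2)
  have := isMinOn_iff.1 hmin x hx
  nlinarith [hx₀.2, Real.Gamma_pos_of_pos hpos]

lemma norm_inv_Gamma_le {s : ℂ} (hs : 1 ≤ s.re) :
    ‖(Complex.Gamma s)⁻¹‖ ≤ 2 * Real.exp (π * |s.im| / 2) := by
  have hpos : 0 < s.re := one_pos.trans_le hs
  have hmono := monotoneOn_norm_Gamma_div_Gamma s.im (mem_Ioi.2 one_pos) hpos hs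
  simp only [Complex.ofReal_one, Real.Gamma_one, div_one, Complex.re_add_im] at hmono
  have hlower : Real.exp (-(π * |s.im| / 2)) / 2 ≤ ‖Complex.Gamma s‖ := by
    have := (exp_neg_le_norm_Gamma_one_add_mul_I s.im).trans hmono
    rw [le_div_iff₀ (Real.Gamma_pos_of_pos hpos)] at this
    nlinarith [half_lt_Gamma hpos, Real.exp_pos (-(π * |s.im| / 2))]
  rw [norm_inv]
  refine (inv_anti₀ (by positivity) hlower).trans_eq ?_
  rw [inv_div, Real.exp_neg, div_inv_eq_mul]

end Gamma

section Bessel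

/-- The `m`-th term of the power series defining `besselJ ν x`. -/
noncomputable def besselTerm (ν : ℂ) (x : ℝ) (m : ℕ) : ℂ :=
  ((-1) ^ m / ((Nat.factorial m : ℂ) * Complex.Gamma (m + ν + 1))) *
    Complex.exp ((2 * m + ν) * Real.log (x / 2))

lemma differentiable_besselTerm (x : ℝ) (m : ℕ) :
    Differentiable ℂ fun ν => besselTerm ν x m := by
  have hGamma : Differentiable ℂ fun ν : ℂ => (Complex.Gamma (m + ν + 1))⁻¹ :=
    Complex.differentiable_one_div_Gamma.comp
      (by fun_prop : Differentiable ℂ fun ν : ℂ => m + ν + 1)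
  simp only [besselTerm, div_eq_mul_inv, mul_inv]
  fun_prop

lemma norm_besselTerm_le {ν : ℂ} {m : ℕ} (hν : 0 ≤ m + ν.re) {x : ℝ} (hx : 0 < x) :
    ‖besselTerm ν x m‖ ≤
      2 * Real.exp (π * |ν.im| / 2) * (x / 2) ^ ν.re * (((x / 2) ^ 2) ^ m / m.factorial) := by
  have hGamma : ‖(Complex.Gamma (m + ν + 1))⁻¹‖ ≤ 2 * Real.exp (π * |ν.im| / 2) := by
    simpa using norm_inv_Gamma_le (s := m + ν + 1) (by simpa using hν)
  have hexp : ‖Complex.exp ((2 * m + ν) * Real.log (x / 2))‖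
      = (x / 2) ^ ν.re * ((x / 2) ^ 2) ^ m := by
    rw [Complex.norm_exp, Complex.re_mul_ofReal, ← pow_mul, ← Real.rpow_natCast,
      ← Real.rpow_add (by positivity), Real.rpow_def_of_pos (by positivity)]
    congr 1
    simp
    ring
  have hsign : ‖((-1 : ℂ)) ^ m‖ = 1 := by simp
  rw [besselTerm, norm_mul, hexp, div_eq_mul_inv, mul_inv, norm_mul, norm_mul, norm_inv,
    Complex.norm_natCast, hsign, one_mul]
  calc (m.factorial : ℝ)⁻¹ * ‖(Complex.Gamma (m + ν + 1))⁻¹‖ * ((x / 2) ^ ν.re * ((x / 2) ^ 2) ^ m)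
      ≤ (m.factorial : ℝ)⁻¹ * (2 * Real.exp (π * |ν.im| / 2))
          * ((x / 2) ^ ν.re * ((x / 2) ^ 2) ^ m) := by gcongr
    _ = _ := by ring

lemma norm_besselJ_le {ν : ℂ} (hν : 0 ≤ ν.re) {x : ℝ} (hx : 0 < x) :
    ‖besselJ ν x‖ ≤
      2 * Real.exp (π * |ν.im| / 2) * (x / 2) ^ ν.re * Real.exp ((x / 2) ^ 2) := by
  have hsum : HasSum (fun m : ℕ => ((x / 2) ^ 2) ^ m / m.factorial) (Real.exp ((x / 2) ^ 2)) := by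
    rw [Real.exp_eq_exp_ℝ]
    exact NormedSpace.expSeries_div_hasSum_exp _
  exact tsum_of_norm_bounded (hsum.mul_left _) fun m => norm_besselTerm_le (by positivity) hx

lemma summable_besselTerm (ν : ℂ) {x : ℝ} (hx : 0 < x) : Summable (besselTerm ν x) := by
  refine ((Real.summable_pow_div_factorial _).mul_left _).of_norm_bounded_eventually_nat
    (g := fun m => 2 * Real.exp (π * |ν.im| / 2) * (x / 2) ^ ν.re
      * (((x / 2) ^ 2) ^ m / m.factorial)) ?_
  filter_upwards [eventually_ge_atTop ⌈-ν.re⌉₊] with m hm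
  exact norm_besselTerm_le (by linarith [Nat.ceil_le.1 hm]) hx

lemma differentiableOn_tsum_besselTerm_add {x : ℝ} (hx : 0 < x) (N : ℕ) :
    DifferentiableOn ℂ (fun ν => ∑' m, besselTerm ν x (m + N)) (Metric.ball 0 N) := by
  have hsummable : Summable fun m : ℕ => ((x / 2) ^ 2) ^ (m + N) / (m + N).factorial :=
    (summable_nat_add_iff N).2 (Real.summable_pow_div_factorial _)
  refine Complex.differentiableOn_tsum_of_summable_norm (hsummable.mul_left
      (2 * Real.exp (π * N / 2) * Real.exp (|Real.log (x / 2)| * N)))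
    (fun m => (differentiable_besselTerm x _).differentiableOn) Metric.isOpen_ball fun m ν hν => ?_
  have hnorm : ‖ν‖ ≤ N := (mem_ball_zero_iff.1 hν).le
  have hre : |ν.re| ≤ N := (Complex.abs_re_le_norm ν).trans hnorm
  have him : |ν.im| ≤ N := (Complex.abs_im_le_norm ν).trans hnorm
  have hnonneg : 0 ≤ ((m + N : ℕ) : ℝ) + ν.re := by
    push_cast
    linarith [neg_abs_le ν.re, Nat.cast_nonneg (α := ℝ) m]
  have hrpow : (x / 2) ^ ν.re ≤ Real.exp (|Real.log (x / 2)| * N) := by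
    rw [Real.rpow_def_of_pos (by positivity)]
    refine Real.exp_le_exp.2 ?_
    calc Real.log (x / 2) * ν.re ≤ |Real.log (x / 2)| * |ν.re| := by
          rw [← abs_mul]; exact le_abs_self _
      _ ≤ |Real.log (x / 2)| * N := by gcongr
  refine (norm_besselTerm_le hnonneg hx).trans ?_
  gcongr

lemma differentiable_besselJ {x : ℝ} (hx : 0 < x) : Differentiable ℂ fun ν => besselJ ν x := by
  intro ν
  obtain ⟨N, hN⟩ := exists_nat_gt ‖ν‖
  have hball : Metric.ball (0 : ℂ) N ∈ 𝓝 ν := Metric.isOpen_ball.mem_nhds (mem_ball_zero_iff.2 hN)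
  have hsplit : (fun ν => besselJ ν x) = fun ν =>
      ∑ m ∈ Finset.range N, besselTerm ν x m + ∑' m, besselTerm ν x (m + N) :=
    funext fun ν => ((summable_besselTerm ν hx).sum_add_tsum_nat_add N).symm
  rw [hsplit]
  exact (DifferentiableAt.fun_sum fun m _ => differentiable_besselTerm x m ν).add
    ((differentiableOn_tsum_besselTerm_add hx N).differentiableAt hball)

end Bessel

section Contour

variable {E : Type*} [NormedAddCommGroup E] [NormedSpace ℂ E]

lemma tendsto_integral_vertical_of_tendsto_zero {g : ℂ → E} {a b : ℝ} (hab : a ≤ b)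
    (hg : Tendsto g (comap Complex.re (cocompact ℝ) ⊓ 𝓟 (Complex.im ⁻¹' Icc a b)) (𝓝 0)) :
    Tendsto (fun T : ℝ => ∫ y in a..b, g (T + y * I)) (cocompact ℝ) (𝓝 0) := by
  rw [Metric.tendsto_nhds]
  intro ε hε
  obtain ⟨c, hc, hcε⟩ := exists_pos_mul_lt hε (b - a)
  have hsmall : ∀ᶠ T in cocompact ℝ, ∀ z : ℂ, z.re = T → z.im ∈ Icc a b → ‖g z‖ < c := by
    have := hg.eventually (Metric.ball_mem_nhds 0 hc)
    rw [eventually_inf_principal, eventually_comap] at this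
    filter_upwards [this] with T hT z hz hzim
    exact mem_ball_zero_iff.1 (hT z hz hzim)
  filter_upwards [hsmall] with T hT
  rw [dist_zero_right]
  refine (intervalIntegral.norm_integral_le_of_norm_le_const (C := c) fun y hy => ?_).trans_lt ?_
  · rw [uIoc_of_le hab] at hy
    exact (hT _ (by simp) (by simpa using Ioc_subset_Icc_self hy)).le
  · rwa [abs_of_nonneg (sub_nonneg.2 hab), mul_comm]

theorem integral_horizontal_line_eq {g : ℂ → E} {a b : ℝ} (hab : a < b)
    (hg : DiffContOnCl ℂ g (Complex.im ⁻¹' Ioo a b))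
    (ha : Integrable fun u : ℝ => g (u + a * I)) (hb : Integrable fun u : ℝ => g (u + b * I))
    (hlim : Tendsto g (comap Complex.re (cocompact ℝ) ⊓ 𝓟 (Complex.im ⁻¹' Icc a b)) (𝓝 0)) :
    ∫ u : ℝ, g (u + a * I) = ∫ u : ℝ, g (u + b * I) := by
  have hcauchy (T : ℝ) : (∫ u in (-T)..T, g (u + a * I)) - (∫ u in (-T)..T, g (u + b * I))
      + I • (∫ y in a..b, g (T + y * I)) - I • (∫ y in a..b, g (-T + y * I)) = 0 := by
    have hcont : ContinuousOn g (Complex.im ⁻¹' Icc a b) := by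
      simpa [Complex.closure_preimage_im, closure_Ioo hab.ne] using hg.continuousOn
    have := Complex.integral_boundary_rect_eq_zero_of_continuousOn_of_differentiableOn g
      (⟨-T, a⟩ : ℂ) ⟨T, b⟩ (hcont.mono fun z hz => by simpa [uIcc_of_le hab.le] using hz.2)
      (hg.differentiableOn.mono fun z hz => by simpa [hab.le] using hz.2)
    simpa using this
  have hline {f : ℝ → E} (hf : Integrable f) :
      Tendsto (fun T : ℝ => ∫ u in (-T)..T, f u) atTop (𝓝 (∫ u, f u)) :=
    intervalIntegral_tendsto_integral hf tendsto_neg_atTop_atBot tendsto_id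
  have hvert := tendsto_integral_vertical_of_tendsto_zero hab.le hlim
  have hright := (hvert.mono_left atTop_le_cocompact).const_smul I
  have hleft := ((hvert.mono_left atBot_le_cocompact).comp tendsto_neg_atTop_atBot).const_smul I
  have htotal := (((hline ha).sub (hline hb)).add hright).sub hleft
  simp only [Function.comp_def, Complex.ofReal_neg, hcauchy, smul_zero, add_zero, sub_zero]
    at htotal
  exact sub_eq_zero.1 (tendsto_nhds_unique htotal tendsto_const_nhds)

lemma diffContOnCl_dslope [CompleteSpace E] {f : ℂ → E} {s : Set ℂ} {c : ℂ} (hs : s ∈ 𝓝 c)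
    (hf : DiffContOnCl ℂ f s) : DiffContOnCl ℂ (dslope f c) s where
  differentiableOn := (Complex.differentiableOn_dslope hs).2 hf.differentiableOn
  continuousOn := (continuousOn_dslope (mem_of_superset hs subset_closure)).2
    ⟨hf.continuousOn, hf.differentiableOn.differentiableAt hs⟩

end Contour

section Residue

lemma exists_diffContOnCl_eq_sub_div {f c : ℂ → ℂ} {s : Set ℂ} {p : ℂ} (hs : s ∈ 𝓝 p)
    (hf : DiffContOnCl ℂ f s) (hc : DiffContOnCl ℂ c s) (hcp : c p = 0) (hderiv : deriv c p ≠ 0)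
    (hne : ∀ z ∈ closure s, c z = 0 → z = p) :
    ∃ g : ℂ → ℂ, DiffContOnCl ℂ g s ∧ ∀ z ≠ p, g z = (f z - f p) / c z := by
  refine ⟨fun z => (dslope c p z)⁻¹ * dslope f p z, ?_, fun z hz => ?_⟩
  · refine ((diffContOnCl_dslope hs hc).inv fun z hz => ?_).smul (diffContOnCl_dslope hs hf)
    rcases eq_or_ne z p with rfl | hzp
    · rwa [dslope_same]
    · rw [dslope_of_ne _ hzp, slope_def_field, hcp, sub_zero]
      exact div_ne_zero (fun h => hzp (hne z hz h)) (sub_ne_zero.2 hzp)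
  · have hzp : z - p ≠ 0 := sub_ne_zero.2 hz
    beta_reduce
    rw [dslope_of_ne _ hz, dslope_of_ne _ hz, slope_def_field, slope_def_field, hcp, sub_zero]
    field_simp

lemma tendsto_inv_cosh_pi_mul :
    Tendsto (fun z : ℂ => (Complex.cosh (π * z))⁻¹) (comap Complex.re (cocompact ℝ)) (𝓝 0) := by
  have hre : Tendsto (fun z : ℂ => π * |z.re|) (comap Complex.re (cocompact ℝ)) atTop :=
    ((tendsto_norm_cocompact_atTop (E := ℝ)).comp tendsto_comap).const_mul_atTop Real.pi_pos
  refine tendsto_inv₀_cobounded.comp (tendsto_norm_atTop_iff_cobounded.1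
    (tendsto_atTop_mono (fun z => ?_) hre))
  have hsinh := abs_sinh_re_le_norm_cosh (π * z)
  rw [Complex.re_ofReal_mul, Real.abs_sinh, abs_mul, abs_of_pos Real.pi_pos] at hsinh
  exact (Real.self_le_sinh_iff.2 (by positivity)).trans hsinh

lemma integrable_inv_cosh_pi_mul : Integrable fun u : ℝ => (Complex.cosh (π * u))⁻¹ := by
  have hcont : Continuous fun u : ℝ => (Complex.cosh (π * u))⁻¹ :=
    Continuous.inv₀ (by fun_prop) cosh_pi_mul_ofReal_ne_zero
  refine integrable_inv_one_add_sq.mono' hcont.aestronglyMeasurable (ae_of_all _ fun u => ?_)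
  rw [norm_inv]
  refine inv_anti₀ (by positivity) ((one_add_sq_le_cosh_pi_mul u).trans ?_)
  exact_mod_cast le_abs_self _

lemma cosh_pi_mul_neg_I_div_two : Complex.cosh (π * (-I / 2)) = 0 := by
  rw [show (π * (-I / 2) : ℂ) = -(π / 2 * I) by ring, Complex.cosh_neg, Complex.cosh_mul_I,
    Complex.cos_pi_div_two]

lemma deriv_cosh_pi_mul_neg_I_div_two :
    deriv (fun z : ℂ => Complex.cosh (π * z)) (-I / 2) = -(π * I) := by
  have hderiv : HasDerivAt (fun z : ℂ => Complex.cosh (π * z))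
      (Complex.sinh (π * (-I / 2)) * (π * 1)) (-I / 2) :=
    ((hasDerivAt_id _).const_mul (π : ℂ)).ccosh
  rw [hderiv.deriv, show (π * (-I / 2) : ℂ) = -(π / 2 * I) by ring, Complex.sinh_neg,
    Complex.sinh_mul_I, Complex.sin_pi_div_two]
  ring

lemma exists_diffContOnCl_eq_sub_div_cosh_pi_mul {N : ℂ → ℂ}
    (hN : DiffContOnCl ℂ N (Complex.im ⁻¹' Ioo (-1) 0)) :
    ∃ g : ℂ → ℂ, DiffContOnCl ℂ g (Complex.im ⁻¹' Ioo (-1) 0) ∧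
      ∀ z ≠ -I / 2, g z = (N z - N (-I / 2)) / Complex.cosh (π * z) := by
  have hcosh : Differentiable ℂ fun z : ℂ => Complex.cosh (π * z) := by fun_prop
  refine exists_diffContOnCl_eq_sub_div ?_ hN hcosh.diffContOnCl cosh_pi_mul_neg_I_div_two ?_
    fun z hz => eq_neg_I_div_two_of_cosh_pi_mul_eq_zero ?_
  · exact (isOpen_Ioo.preimage Complex.continuous_im).mem_nhds (by norm_num)
  · simp [deriv_cosh_pi_mul_neg_I_div_two, Real.pi_ne_zero]
  · simpa [Complex.closure_preimage_im, closure_Ioo] using hz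

theorem integral_div_cosh_pi_mul_eq {N : ℂ → ℂ}
    (hN : DiffContOnCl ℂ N (Complex.im ⁻¹' Ioo (-1) 0))
    (h0 : Integrable fun u : ℝ => N u / Complex.cosh (π * u))
    (h1 : Integrable fun u : ℝ => N (u - I) / Complex.cosh (π * u))
    (hlim : Tendsto (fun z => N z / Complex.cosh (π * z))
      (comap Complex.re (cocompact ℝ) ⊓ 𝓟 (Complex.im ⁻¹' Icc (-1) 0)) (𝓝 0)) :
    ∫ u : ℝ, N u / Complex.cosh (π * u) =
      2 * N (-I / 2) * (∫ u : ℝ, (Complex.cosh (π * u))⁻¹)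
        - ∫ u : ℝ, N (u - I) / Complex.cosh (π * u) := by
  obtain ⟨g, hg, hgeq⟩ := exists_diffContOnCl_eq_sub_div_cosh_pi_mul hN
  have htop (u : ℝ) : g (u + (0 : ℝ) * I)
      = N u / Complex.cosh (π * u) - N (-I / 2) * (Complex.cosh (π * u))⁻¹ := by
    rw [hgeq _ fun h => by norm_num [Complex.ext_iff] at h, Complex.ofReal_zero, zero_mul, add_zero]
    ring
  have hbot (u : ℝ) : g (u + (-1 : ℝ) * I)
      = N (-I / 2) * (Complex.cosh (π * u))⁻¹ - N (u - I) / Complex.cosh (π * u) := by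
    rw [hgeq _ fun h => by norm_num [Complex.ext_iff] at h,
      show (u + (-1 : ℝ) * I : ℂ) = u - I by simp [sub_eq_add_neg], cosh_pi_mul_sub_I]
    ring
  have hinv := integrable_inv_cosh_pi_mul.const_mul (N (-I / 2))
  have hvanish : Tendsto g (comap Complex.re (cocompact ℝ) ⊓ 𝓟 (Complex.im ⁻¹' Icc (-1) 0))
      (𝓝 0) := by
    have := hlim.sub ((tendsto_inv_cosh_pi_mul.mono_left inf_le_left).const_mul (N (-I / 2)))
    rw [mul_zero, sub_zero] at this
    have hne : ∀ᶠ z : ℂ in comap Complex.re (cocompact ℝ), z ≠ -I / 2 :=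
      (tendsto_comap.eventually isCompact_singleton.compl_mem_cocompact).mono
        fun z (hz : z.re ≠ 0) h => hz (by simp [h])
    refine this.congr' ((hne.filter_mono inf_le_left).mono fun z hz => ?_)
    rw [hgeq z hz]
    ring
  have hshift := integral_horizontal_line_eq (by norm_num) hg
    ((hinv.sub h1).congr (ae_of_all _ fun u => (hbot u).symm))
    ((h0.sub hinv).congr (ae_of_all _ fun u => (htop u).symm)) hvanish
  simp only [htop, hbot] at hshift
  rw [integral_sub hinv h1, integral_sub h0 hinv, integral_const_mul] at hshift
  linear_combination -hshift

end Residue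

section Decay

variable {r : ℝ}

lemma norm_div_cosh_pi_mul_le {w : ℂ} {c u : ℝ} (hw : ‖w‖ ≤ c * Real.exp (π * |u|)) :
    ‖w / Complex.cosh (π * u)‖ ≤ 2 * c := by
  have hcosh : Real.exp (π * |u|) ≤ 2 * Real.cosh (π * u) := by
    simpa [abs_mul, abs_of_pos Real.pi_pos] using exp_abs_le_two_mul_cosh (π * u)
  have hc : 0 ≤ c := nonneg_of_mul_nonneg_left ((norm_nonneg w).trans hw) (Real.exp_pos _)
  rw [← Complex.ofReal_mul, ← Complex.ofReal_cosh, norm_div,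
    Complex.norm_of_nonneg (Real.cosh_pos _).le, div_le_iff₀ (Real.cosh_pos _)]
  nlinarith [mul_le_mul_of_nonneg_left hcosh hc]

lemma integrable_one_add_abs_rpow_neg (hr : 1 < r) :
    Integrable fun u : ℝ => (1 + |u|) ^ (-r) := by
  simpa using integrable_one_add_norm (E := ℝ) (μ := volume) (r := r) (by simpa using hr)

lemma integrable_div_cosh_pi_mul (hr : 1 < r) {f : ℝ → ℂ} (hf : Continuous f) {K : ℝ}
    (hbound : ∀ u, ‖f u‖ ≤ K * (1 + |u|) ^ (-r) * Real.exp (π * |u|)) :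
    Integrable fun u : ℝ => f u / Complex.cosh (π * u) := by
  have hcont : Continuous fun u : ℝ => f u / Complex.cosh (π * u) :=
    hf.div (by fun_prop) cosh_pi_mul_ofReal_ne_zero
  exact (((integrable_one_add_abs_rpow_neg hr).const_mul K).const_mul 2).mono'
    hcont.aestronglyMeasurable (ae_of_all _ fun u => norm_div_cosh_pi_mul_le (hbound u))

lemma norm_integral_div_cosh_pi_mul_le (hr : 1 < r) {f : ℝ → ℂ} {K : ℝ}
    (hbound : ∀ u, ‖f u‖ ≤ K * (1 + |u|) ^ (-r) * Real.exp (π * |u|)) :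
    ‖∫ u : ℝ, f u / Complex.cosh (π * u)‖ ≤ 2 * K * ∫ u : ℝ, (1 + |u|) ^ (-r) := by
  have hint := ((integrable_one_add_abs_rpow_neg hr).const_mul K).const_mul 2
  refine (norm_integral_le_of_norm_le hint
    (ae_of_all _ fun u => norm_div_cosh_pi_mul_le (hbound u))).trans_eq ?_
  rw [integral_const_mul, integral_const_mul, mul_assoc]

lemma tendsto_div_cosh_pi_mul (hr : 0 < r) {N : ℂ → ℂ} {s : Set ℂ} {K : ℝ}
    (hbound : ∀ z ∈ s, ‖N z‖ ≤ K * (1 + |z.re|) ^ (-r) * Real.exp (π * |z.re|)) :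
    Tendsto (fun z => N z / Complex.cosh (π * z)) (comap Complex.re (cocompact ℝ) ⊓ 𝓟 s) (𝓝 0) := by
  have habs : Tendsto (fun z : ℂ => |z.re|) (comap Complex.re (cocompact ℝ) ⊓ 𝓟 s) atTop :=
    ((tendsto_norm_cocompact_atTop (E := ℝ)).comp tendsto_comap).mono_left inf_le_left
  have hlim : Tendsto (fun z : ℂ => 4 * (K * (1 + |z.re|) ^ (-r)))
      (comap Complex.re (cocompact ℝ) ⊓ 𝓟 s) (𝓝 0) := by
    simpa using (((tendsto_rpow_neg_atTop hr).comp
      (tendsto_atTop_add_const_left _ 1 habs)).const_mul K).const_mul 4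
  refine squeeze_zero_norm' ?_ hlim
  filter_upwards [habs.eventually_ge_atTop 1, mem_inf_of_right (mem_principal_self s)] with z hre hz
  have hpi : |(π * z).re| = π * |z.re| := by
    rw [Complex.re_ofReal_mul, abs_mul, abs_of_pos Real.pi_pos]
  have hcosh := exp_abs_div_four_le_norm_cosh (z := π * z)
    (by rw [hpi]; nlinarith [Real.pi_gt_three])
  rw [hpi] at hcosh
  have hK : 0 ≤ K * (1 + |z.re|) ^ (-r) :=
    nonneg_of_mul_nonneg_left ((norm_nonneg _).trans (hbound z hz)) (Real.exp_pos _)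
  rw [norm_div, div_le_iff₀ ((by positivity : (0 : ℝ) < _).trans_le hcosh)]
  nlinarith [hbound z hz, mul_le_mul_of_nonneg_left hcosh hK]

theorem norm_integral_div_cosh_pi_mul_le_of_strip (hr : 1 < r) {N : ℂ → ℂ} {K K₁ : ℝ}
    (hN : DiffContOnCl ℂ N (Complex.im ⁻¹' Ioo (-1) 0))
    (hK : ∀ z : ℂ, z.im ∈ Icc (-1) 0 →
      ‖N z‖ ≤ K * (1 + |z.re|) ^ (-r) * Real.exp (π * |z.re|))
    (hK₁ : ∀ u : ℝ, ‖N (u - I)‖ ≤ K₁ * (1 + |u|) ^ (-r) * Real.exp (π * |u|)) :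
    ‖∫ u : ℝ, N u / Complex.cosh (π * u)‖ ≤
      2 * ‖N (-I / 2)‖ * ‖∫ u : ℝ, (Complex.cosh (π * u))⁻¹‖
        + 2 * K₁ * ∫ u : ℝ, (1 + |u|) ^ (-r) := by
  have hcont : ContinuousOn N (Complex.im ⁻¹' Icc (-1) 0) := by
    simpa [Complex.closure_preimage_im, closure_Ioo] using hN.continuousOn
  have hreal : Continuous fun u : ℝ => N u :=
    hcont.comp_continuous (by fun_prop) fun u => by simp
  have hshifted : Continuous fun u : ℝ => N (u - I) :=
    hcont.comp_continuous (by fun_prop) fun u => by simp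
  rw [integral_div_cosh_pi_mul_eq hN
    (integrable_div_cosh_pi_mul hr hreal fun u => by simpa using hK u (by simp))
    (integrable_div_cosh_pi_mul hr hshifted hK₁)
    (tendsto_div_cosh_pi_mul (one_pos.trans hr) hK)]
  refine (norm_sub_le _ _).trans
    (add_le_add (le_of_eq ?_) (norm_integral_div_cosh_pi_mul_le hr hK₁))
  rw [norm_mul, norm_mul, Complex.norm_two]

end Decay

section Numerator

/-- The holomorphic function whose quotient by `cosh (π z)` is, on the real line, the integrand
of `Hplus`. -/
noncomputable def hplusNumerator (H : ℂ → ℂ) (x : ℝ) (z : ℂ) : ℂ :=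
  H z * besselJ (2 * I * z) x * z

variable {H : ℂ → ℂ} {x δ B : ℝ}

lemma Hplus_eq_integral_hplusNumerator {h : ℝ → ℝ} (hH : ∀ t : ℝ, H t = h t) (x : ℝ) :
    Hplus h x = 2 * I / π * ∫ t : ℝ, hplusNumerator H x t / Complex.cosh (π * t) := by
  simp only [Hplus, hplusNumerator, hH, mul_div_assoc, Complex.ofReal_cosh, Complex.ofReal_mul]

lemma diffContOnCl_hplusNumerator {s : Set ℂ} (hH : DiffContOnCl ℂ H s) (hx : 0 < x) :
    DiffContOnCl ℂ (hplusNumerator H x) s := by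
  have hbessel : Differentiable ℂ fun z : ℂ => besselJ (2 * I * z) x :=
    (differentiable_besselJ hx).comp (by fun_prop : Differentiable ℂ fun z : ℂ => 2 * I * z)
  exact (hH.smul hbessel.diffContOnCl).smul differentiable_id.diffContOnCl

lemma norm_hplusNumerator_le (hδ : 0 ≤ 1 + δ) (hx : 0 < x) {z : ℂ} (hz : z.im ≤ 0)
    (hH : ‖H z‖ ≤ B * (1 + ‖z‖) ^ (-(2 + δ))) :
    ‖hplusNumerator H x z‖ ≤ 2 * B * Real.exp ((x / 2) ^ 2) * (x / 2) ^ (-2 * z.im)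
      * (1 + |z.re|) ^ (-(1 + δ)) * Real.exp (π * |z.re|) := by
  have hpos : 0 < 1 + ‖z‖ := by positivity
  have hB : 0 ≤ B := nonneg_of_mul_nonneg_left ((norm_nonneg _).trans hH) (by positivity)
  have hbessel : ‖besselJ (2 * I * z) x‖ ≤
      2 * Real.exp (π * |z.re|) * (x / 2) ^ (-2 * z.im) * Real.exp ((x / 2) ^ 2) := by
    have hre : (2 * I * z).re = -2 * z.im := by simp
    have him : π * |(2 * I * z).im| / 2 = π * |z.re| := by simp [abs_mul]; ring
    rw [← hre, ← him]
    exact norm_besselJ_le (by linarith) hx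
  have hdecay : (1 + ‖z‖) ^ (-(2 + δ)) * ‖z‖ ≤ (1 + |z.re|) ^ (-(1 + δ)) :=
    calc (1 + ‖z‖) ^ (-(2 + δ)) * ‖z‖ ≤ (1 + ‖z‖) ^ (-(2 + δ)) * (1 + ‖z‖) := by
          gcongr; linarith
      _ = (1 + ‖z‖) ^ (-(1 + δ)) := by
          rw [← Real.rpow_add_one hpos.ne']; ring_nf
      _ ≤ (1 + |z.re|) ^ (-(1 + δ)) :=
          Real.rpow_le_rpow_of_nonpos (by positivity) (by gcongr; exact Complex.abs_re_le_norm z)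
            (by linarith)
  rw [hplusNumerator, norm_mul, norm_mul]
  calc ‖H z‖ * ‖besselJ (2 * I * z) x‖ * ‖z‖
      ≤ B * (1 + ‖z‖) ^ (-(2 + δ)) * (2 * Real.exp (π * |z.re|) * (x / 2) ^ (-2 * z.im)
          * Real.exp ((x / 2) ^ 2)) * ‖z‖ := by gcongr
    _ = 2 * B * Real.exp ((x / 2) ^ 2) * (x / 2) ^ (-2 * z.im)
          * ((1 + ‖z‖) ^ (-(2 + δ)) * ‖z‖) * Real.exp (π * |z.re|) := by ring
    _ ≤ _ := by gcongr

lemma rpow_le_one_add_rpow {y t s : ℝ} (hy : 0 ≤ y) (ht : t ∈ Icc 0 s) : y ^ t ≤ 1 + y ^ s := by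
  rcases le_total y 1 with h | h
  · linarith [Real.rpow_le_one hy h ht.1, Real.rpow_nonneg hy s]
  · linarith [Real.rpow_le_rpow_of_exponent_le h ht.2]

lemma norm_integral_hplusNumerator_div_cosh_le (hδ : 0 < δ) (hx : 0 < x)
    (hH : DiffContOnCl ℂ H (Complex.im ⁻¹' Ioo (-1) 0))
    (hB : ∀ z : ℂ, z.im ∈ Icc (-1) 0 → ‖H z‖ ≤ B * (1 + ‖z‖) ^ (-(2 + δ))) :
    ‖∫ t : ℝ, hplusNumerator H x t / Complex.cosh (π * t)‖ ≤
      B * Real.exp ((x / 2) ^ 2) * (2 * x * ‖∫ u : ℝ, (Complex.cosh (π * u))⁻¹‖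
        + x ^ 2 * ∫ u : ℝ, (1 + |u|) ^ (-(1 + δ))) := by
  have hB0 : 0 ≤ B := by simpa using (norm_nonneg _).trans (hB 0 (by simp))
  have hN {z : ℂ} (hz : z.im ∈ Icc (-1) 0) :=
    norm_hplusNumerator_le (by linarith) hx hz.2 (hB z hz)
  have hpole : ‖hplusNumerator H x (-I / 2)‖ ≤ B * Real.exp ((x / 2) ^ 2) * x := by
    have him : -2 * (-I / 2).im = 1 := by norm_num
    have hre : (-I / 2).re = 0 := by norm_num
    refine (hN (by norm_num)).trans_eq ?_
    rw [him, hre, Real.rpow_one, abs_zero, add_zero, Real.one_rpow, mul_zero, Real.exp_zero]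
    ring
  have hshifted (u : ℝ) : ‖hplusNumerator H x (u - I)‖ ≤ B * Real.exp ((x / 2) ^ 2) * (x ^ 2 / 2)
      * (1 + |u|) ^ (-(1 + δ)) * Real.exp (π * |u|) := by
    have him : -2 * (u - I).im = 2 := by simp
    have hre : (u - I).re = u := by simp
    refine (hN (by simp)).trans_eq ?_
    rw [him, hre, Real.rpow_two]
    ring
  have hstrip (z : ℂ) (hz : z.im ∈ Icc (-1) 0) : ‖hplusNumerator H x z‖ ≤
      2 * B * Real.exp ((x / 2) ^ 2) * (1 + (x / 2) ^ (2 : ℝ))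
        * (1 + |z.re|) ^ (-(1 + δ)) * Real.exp (π * |z.re|) := by
    refine (hN hz).trans ?_
    gcongr
    exact rpow_le_one_add_rpow (by positivity) ⟨by linarith [hz.2], by linarith [hz.1]⟩
  calc _ ≤ _ := norm_integral_div_cosh_pi_mul_le_of_strip (by linarith)
        (diffContOnCl_hplusNumerator hH hx) hstrip hshifted
    _ ≤ 2 * (B * Real.exp ((x / 2) ^ 2) * x) * ‖∫ u : ℝ, (Complex.cosh (π * u))⁻¹‖
        + 2 * (B * Real.exp ((x / 2) ^ 2) * (x ^ 2 / 2)) * ∫ u : ℝ, (1 + |u|) ^ (-(1 + δ)) := by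
          gcongr
    _ = _ := by ring

lemma exists_norm_Hplus_le_mul {h : ℝ → ℝ} (hδ : 0 < δ) (hext : ∀ t : ℝ, H t = h t)
    (hH : DiffContOnCl ℂ H (Complex.im ⁻¹' Ioo (-1) 0))
    (hB : ∀ z : ℂ, z.im ∈ Icc (-1) 0 → ‖H z‖ ≤ B * (1 + ‖z‖) ^ (-(2 + δ))) (X : ℝ) :
    ∃ C : ℝ, ∀ x : ℝ, 0 < x → x < X → ‖Hplus h x‖ ≤ C * x := by
  set I₀ := ‖∫ u : ℝ, (Complex.cosh (π * u))⁻¹‖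
  set I₁ := ∫ u : ℝ, (1 + |u|) ^ (-(1 + δ))
  have hB0 : 0 ≤ B := by simpa using (norm_nonneg _).trans (hB 0 (by simp))
  have hI₁ : 0 ≤ I₁ := integral_nonneg fun u => by positivity
  have hconst : ‖2 * I / (π : ℂ)‖ = 2 / π := by simp [abs_of_pos Real.pi_pos]
  refine ⟨2 / π * (B * Real.exp ((X / 2) ^ 2) * (2 * I₀ + X * I₁)), fun x hx hxX => ?_⟩
  rw [Hplus_eq_integral_hplusNumerator hext, norm_mul, hconst]
  calc 2 / π * ‖∫ t : ℝ, hplusNumerator H x t / Complex.cosh (π * t)‖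
      ≤ 2 / π * (B * Real.exp ((x / 2) ^ 2) * (2 * x * I₀ + x ^ 2 * I₁)) := by
        gcongr; exact norm_integral_hplusNumerator_div_cosh_le hδ hx hH hB
    _ = 2 / π * (B * Real.exp ((x / 2) ^ 2) * (2 * I₀ + x * I₁)) * x := by ring
    _ ≤ 2 / π * (B * Real.exp ((X / 2) ^ 2) * (2 * I₀ + X * I₁)) * x := by gcongr

end Numerator

lemma tendsto_nhdsGT_zero_of_norm_le_mul {E : Type*} [SeminormedAddCommGroup E] {f : ℝ → E}
    {C X : ℝ} (hX : 0 < X) (hf : ∀ x, 0 < x → x < X → ‖f x‖ ≤ C * x) :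
    Tendsto f (𝓝[>] 0) (𝓝 0) := by
  have hzero : Tendsto (fun x : ℝ => C * x) (𝓝[>] 0) (𝓝 0) :=
    (Continuous.tendsto' (by fun_prop) 0 0 (mul_zero C)).mono_left nhdsWithin_le_nhds
  refine squeeze_zero_norm' ?_ hzero
  filter_upwards [Ioo_mem_nhdsGT hX] with x hx using hf x hx.1 hx.2

lemma IsInHClass.diffContOnCl {A δ a b : ℝ} {h : ℝ → ℝ} {H : ℂ → ℂ} (hh : IsInHClass A δ h H)
    (ha : -A ≤ a) (hb : b ≤ A) : DiffContOnCl ℂ H (Complex.im ⁻¹' Ioo a b) := by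
  refine (hh.holo.mono (closure_minimal (fun z hz => ?_) ?_)).diffContOnCl
  · exact abs_le.2 ⟨ha.trans hz.1.le, hz.2.le.trans hb⟩
  · exact isClosed_le (by fun_prop) continuous_const

theorem Hplus_bound_linear_general {δ : ℝ} (hδ : 0 < δ) {h : ℝ → ℝ} {H : ℂ → ℂ}
    (hext : ∀ t : ℝ, H t = h t) (hH : DiffContOnCl ℂ H (Complex.im ⁻¹' Ioo (-1) 0))
    (hbound : ∃ B : ℝ, ∀ z : ℂ, z.im ∈ Icc (-1) 0 → ‖H z‖ ≤ B * (1 + ‖z‖) ^ (-(2 + δ))) :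
    (∀ X : ℝ, ∃ C : ℝ, ∀ x : ℝ, 0 < x → x < X → ‖Hplus h x‖ ≤ C * x) ∧
      Tendsto (Hplus h) (𝓝[>] 0) (𝓝 0) := by
  obtain ⟨B, hB⟩ := hbound
  have hlinear := exists_norm_Hplus_le_mul hδ hext hH hB
  obtain ⟨C, hC⟩ := hlinear 1
  exact ⟨hlinear, tendsto_nhdsGT_zero_of_norm_le_mul one_pos hC⟩

end

/-- For `h ∈ 𝓗(A,δ)` with `A > 13`, we have `|H⁺(x)| ≤ C x` on `(0, 4π)`; in particular
`H⁺(x) → 0` as `x → 0⁺`. -/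
theorem Hplus_bound_linear (A δ : ℝ) (hA : 13 < A) (hδ : 0 < δ) (h : ℝ → ℝ) (H : ℂ → ℂ)
    (hh : IsInHClass A δ h H) :
    (∃ C : ℝ, ∀ x : ℝ, 0 < x → x < 4 * π → ‖Hplus h x‖ ≤ C * x) ∧
      Filter.Tendsto (Hplus h) (nhdsWithin 0 (Set.Ioi 0)) (nhds 0) := by
  obtain ⟨hlinear, hlim⟩ := Hplus_bound_linear_general hδ hh.extends_h
    (hh.diffContOnCl (by linarith) (by linarith)) <| hh.bound.imp fun B hB z hz =>
      hB z (abs_le.2 ⟨by linarith [hz.1], by linarith [hz.2]⟩)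
  exact ⟨hlinear (4 * π), hlim⟩
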